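/- Let F₀ be a Borel probability measure on ℝ³ for which there is no straight line L = {v₀ + τ w : τ ∈ ℝ} (v₀ ∈ ℝ³, w a unit vector) with F₀(L) = 1, and let ψ₀(ξ) = ∫_{ℝ³} exp(−i v·ξ) dF₀(v) be its characteristic function. Then there exist a unit vector n ∈ ℝ³ and constants d > μ > 0, ε > 0, κ₀ > 0 such that 1 − |ψ₀(ξ)| ≥ κ₀ for every ξ ∈ ℝ³ with d − μ ≤ |ξ| ≤ d + μ and |ξ·n| ≤ ε|ξ|. -/

import Mathlib

noncomputable section

open MeasureTheory Real Filter Metric Set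
open scoped RealInnerProductSpace Topology

/-- ℝ³ as a Euclidean space. -/
abbrev E3 : Type := EuclideanSpace ℝ (Fin 3)

/-- The surface measure on the unit sphere S² ⊂ ℝ³. -/
def sphμ : Measure (sphere (0 : E3) 1) := (volume : Measure E3).toSphere

/-- The characteristic function (Fourier transform) of a Borel measure on ℝ³,
`ψ(ξ) = ∫ e^{-i v·ξ} dΨ(v)`. -/
def charFn (Ψ : Measure E3) (ξ : E3) : ℂ :=
  ∫ v, Complex.exp (-(Complex.I * (⟪v, ξ⟫ : ℂ))) ∂Ψ

/-- `ψ` is a characteristic function of some Borel probability measure on ℝ³. -/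
def IsCharFn (ψ : E3 → ℂ) : Prop :=
  ∃ Ψ : Measure E3, IsProbabilityMeasure Ψ ∧ ψ = charFn Ψ

/-- Finiteness of `‖φ - 1‖_α`, i.e. the quantitative part of membership in `𝒦^α`. -/
def KBdd (α : ℝ) (φ : E3 → ℂ) : Prop :=
  ∃ C : ℝ, ∀ ξ : E3, ξ ≠ 0 → ‖φ ξ - 1‖ ≤ C * ‖ξ‖ ^ α

/-- Membership in the space `𝒦^α`. -/
def memK (α : ℝ) (φ : E3 → ℂ) : Prop := IsCharFn φ ∧ KBdd α φ

/-- The distance `‖φ - φ'‖_α = sup_{ξ ≠ 0} |φ(ξ) - φ'(ξ)|/|ξ|^α` on `𝒦^α`. -/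
def Kdist (α : ℝ) (φ φ' : E3 → ℂ) : ℝ :=
  ⨆ ξ : {ξ : E3 // ξ ≠ 0}, ‖φ ξ.1 - φ' ξ.1‖ / ‖(ξ.1 : E3)‖ ^ α

/-- `ξ⁺ = ξ/2 + (|ξ|/2)σ`. -/
def xiPlus (ξ : E3) (σ : sphere (0 : E3) 1) : E3 := (1/2 : ℝ) • ξ + (‖ξ‖ / 2) • (σ : E3)

/-- `ξ⁻ = ξ/2 - (|ξ|/2)σ`. -/
def xiMinus (ξ : E3) (σ : sphere (0 : E3) 1) : E3 := (1/2 : ℝ) • ξ - (‖ξ‖ / 2) • (σ : E3)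

/-- The Bobylev collision integrand at time `t`, frequency `ξ`, direction `σ`. -/
def bobylevIntegrand (b : ℝ → ℝ) (ψ : ℝ → E3 → ℂ) (t : ℝ) (ξ : E3)
    (σ : sphere (0 : E3) 1) : ℂ :=
  (b (⟪ξ, (σ : E3)⟫ / ‖ξ‖) : ℂ) *
    (ψ t (xiPlus ξ σ) * ψ t (xiMinus ξ σ) - ψ t ξ)

/-- `ψ : [0,∞) × ℝ³ → ℂ` is a solution of the Fourier-transformed (Bobylev)
homogeneous Boltzmann Cauchy problem with collision kernel `b` and initial datum `ψ₀`. -/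
structure IsBobylevSolution (b : ℝ → ℝ) (ψ : ℝ → E3 → ℂ) (ψ₀ : E3 → ℂ) : Prop where
  cont : ContinuousOn (fun p : ℝ × E3 => ψ p.1 p.2) (Set.Ici 0 ×ˢ Set.univ)
  init : ψ 0 = ψ₀
  isCharFn : ∀ t ≥ 0, IsCharFn (ψ t)
  integrable : ∀ t ≥ 0, ∀ ξ : E3, Integrable (bobylevIntegrand b ψ t ξ) sphμ
  eq : ∀ t ≥ 0, ∀ ξ : E3, HasDerivWithinAt (fun τ => ψ τ ξ)
      (∫ σ, bobylevIntegrand b ψ t ξ σ ∂sphμ) (Set.Ici 0) t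

/-- Continuity of `t ↦ ψ(t,·)` from `[0,∞)` into the metric space `(𝒦^α, ‖·‖_α)`. -/
def KContinuous (α : ℝ) (ψ : ℝ → E3 → ℂ) : Prop :=
  ∀ t₀ ∈ Set.Ici (0:ℝ), Tendsto (fun t => Kdist α (ψ t) (ψ t₀)) (𝓝[Set.Ici (0:ℝ)] t₀) (𝓝 0)

/-- The angular singularity assumption `b(cos θ) θ^{2+2s} → K` as `θ → 0+`. -/
def KernelSingular (b : ℝ → ℝ) (s K : ℝ) : Prop :=
  Tendsto (fun θ : ℝ => b (Real.cos θ) * θ ^ (2 + 2*s)) (𝓝[>] 0) (𝓝 K)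

/-!
A mean of complex numbers of modulus one has modulus one only if they almost all coincide, so
`‖charFun F ξ‖ = 1` forces `⟪x - y, ξ⟫ ∈ 2πℤ` for all `x`, `y` in the support of `F`. Finitely many
such differences span the directions of the support, and for small `ξ` their inner products with `ξ`
have absolute value less than `2π`; hence near the origin `‖charFun F ξ‖ = 1` only for `ξ`
orthogonal to the support. When the support is not contained in an affine subspace of codimension
two, these `ξ` lie on a line `ℝ ∙ n`, which a closed cone around the hyperplane orthogonal to `n`
meets only at the origin. Compactness of the truncated cone makes the bound uniform.
-/

lemma eq_of_exp_mul_I_eq_of_abs_sub_lt {a b : ℝ}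
    (h : Complex.exp (a * Complex.I) = Complex.exp (b * Complex.I)) (hab : |a - b| < 2 * π) :
    a = b := by
  obtain ⟨m, hm⟩ : ∃ m : ℤ, a = b + m * (2 * π) :=
    Circle.exp_eq_exp.1 (Circle.ext (by simpa only [Circle.coe_exp] using h))
  have hm_lt : |(m : ℝ)| < 1 := by
    rw [hm, add_sub_cancel_left, abs_mul, abs_of_pos two_pi_pos] at hab
    exact (mul_lt_iff_lt_one_left two_pi_pos).1 hab
  have hm_zero : m = 0 := Int.abs_lt_one_iff.1 (by exact_mod_cast hm_lt)
  simpa only [hm_zero, Int.cast_zero, zero_mul, add_zero] using hm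

lemma measure_eq_one_of_subset {Ω : Type*} [MeasurableSpace Ω] {F : Measure Ω}
    [IsProbabilityMeasure F] {s t : Set Ω} (hs : F s = 1) (hst : s ⊆ t) : F t = 1 :=
  le_antisymm prob_le_one (hs ▸ measure_mono hst)

lemma measure_support_eq_one {X : Type*} [TopologicalSpace X] [HereditarilyLindelofSpace X]
    [MeasurableSpace X] [OpensMeasurableSpace X] (F : Measure X) [IsProbabilityMeasure F] :
    F F.support = 1 :=
  (mem_ae_iff_prob_eq_one Measure.isClosed_support.measurableSet).1 Measure.support_mem_ae

section Lines

variable {E : Type*} [NormedAddCommGroup E] [NormedSpace ℝ E] [Nontrivial E]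

lemma exists_norm_eq_one_le_span_singleton {K : Submodule ℝ E} [FiniteDimensional ℝ K]
    (hK : Module.finrank ℝ K ≤ 1) : ∃ n : E, ‖n‖ = 1 ∧ K ≤ ℝ ∙ n := by
  obtain ⟨u, rfl⟩ := ((Submodule.finrank_le_one_iff_isPrincipal K).1 hK).principal
  rcases eq_or_ne u 0 with rfl | hu
  · obtain ⟨n, hn⟩ := exists_norm_eq E zero_le_one
    exact ⟨n, hn, by simp only [Submodule.span_zero_singleton, bot_le]⟩
  · refine ⟨‖u‖⁻¹ • u, norm_smul_inv_norm (𝕜 := ℝ) hu, ?_⟩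
    rw [Submodule.span_singleton_smul_eq (inv_ne_zero (norm_ne_zero_iff.2 hu)).isUnit]

lemma exists_subset_line_of_finrank_direction_le_one {A : AffineSubspace ℝ E}
    [FiniteDimensional ℝ A.direction] (hA : Module.finrank ℝ A.direction ≤ 1) :
    ∃ v₀ w : E, ‖w‖ = 1 ∧ (A : Set E) ⊆ {v | ∃ τ : ℝ, v = v₀ + τ • w} := by
  obtain ⟨w, hw, hAw⟩ := exists_norm_eq_one_le_span_singleton hA
  rcases (A : Set E).eq_empty_or_nonempty with hempty | ⟨v₀, hv₀⟩
  · exact ⟨0, w, hw, hempty ▸ empty_subset _⟩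
  · refine ⟨v₀, w, hw, fun v hv => ?_⟩
    obtain ⟨τ, hτ⟩ := Submodule.mem_span_singleton.1 (hAw (A.vsub_mem_direction hv hv₀))
    exact ⟨τ, by rw [hτ, vsub_eq_sub, add_sub_cancel]⟩

lemma measure_ne_one_of_finrank_direction_le_one [MeasurableSpace E] {F : Measure E}
    [IsProbabilityMeasure F]
    (hnoline : ∀ v₀ w : E, ‖w‖ = 1 → F {v : E | ∃ τ : ℝ, v = v₀ + τ • w} ≠ 1)
    {A : AffineSubspace ℝ E} [FiniteDimensional ℝ A.direction]
    (hA : Module.finrank ℝ A.direction ≤ 1) : F A ≠ 1 := by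
  obtain ⟨v₀, w, hw, hAline⟩ := exists_subset_line_of_finrank_direction_le_one hA
  exact fun hone => hnoline v₀ w hw (measure_eq_one_of_subset hone hAline)

end Lines

section Geometry

variable {E : Type*} [NormedAddCommGroup E] [InnerProductSpace ℝ E]

lemma abs_real_inner_eq_norm_of_mem_span_singleton {n ξ : E} (hn : ‖n‖ = 1) (hξ : ξ ∈ ℝ ∙ n) :
    |⟪ξ, n⟫| = ‖ξ‖ := by
  obtain ⟨t, rfl⟩ := Submodule.mem_span_singleton.1 hξ
  rw [real_inner_smul_left, real_inner_self_eq_norm_sq, norm_smul, hn, one_pow, mul_one, mul_one,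
    Real.norm_eq_abs]

lemma isCompact_annulus_inter_cone [ProperSpace E] (n : E) (a b ε : ℝ) :
    IsCompact {ξ : E | a ≤ ‖ξ‖ ∧ ‖ξ‖ ≤ b ∧ |⟪ξ, n⟫| ≤ ε * ‖ξ‖} := by
  refine (isCompact_closedBall (0 : E) b).of_isClosed_subset ?_
    fun ξ hξ => mem_closedBall_zero_iff.2 hξ.2.1
  exact (isClosed_le (by fun_prop) (by fun_prop)).and
    ((isClosed_le (by fun_prop) (by fun_prop)).and (isClosed_le (by fun_prop) (by fun_prop)))

end Geometry

section CharFun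

variable {E : Type*} [NormedAddCommGroup E] [InnerProductSpace ℝ E] [MeasurableSpace E]
  {F : Measure E} [IsProbabilityMeasure F]

lemma exp_inner_mul_I_eq_of_norm_charFun_eq_one {ξ : E} (hξ : ‖charFun F ξ‖ = 1) {x y : E}
    (hx : x ∈ F.support) (hy : y ∈ F.support) :
    Complex.exp (⟪x, ξ⟫ * Complex.I) = Complex.exp (⟪y, ξ⟫ * Complex.I) := by
  rcases ae_eq_const_or_norm_integral_lt_of_norm_le_const (μ := F) (C := 1)
      (f := fun v => Complex.exp (⟪v, ξ⟫ * Complex.I))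
      (.of_forall fun v => (Complex.norm_exp_ofReal_mul_I _).le) with hconst | hlt
  · have hsupp := Measure.support_subset_of_isClosed
      (isClosed_eq (by fun_prop) continuous_const) hconst
    exact (hsupp hx).trans (hsupp hy).symm
  · rw [probReal_univ, one_mul] at hlt
    exact absurd hξ hlt.ne

lemma exists_pos_le_one_sub_norm_charFun [BorelSpace E]
    [SecondCountableTopology E] {K : Set E} (hK : IsCompact K)
    (hne : ∀ ξ ∈ K, ‖charFun F ξ‖ ≠ 1) : ∃ κ > 0, ∀ ξ ∈ K, κ ≤ 1 - ‖charFun F ξ‖ :=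
  hK.exists_forall_le' (by fun_prop)
    fun ξ hξ => sub_pos.2 ((norm_charFun_le_one ξ).lt_of_ne (hne ξ hξ))

variable (F) in
lemma eventually_mem_orthogonal_of_norm_charFun_eq_one
    [FiniteDimensional ℝ (vectorSpan ℝ F.support)] :
    ∀ᶠ ξ in 𝓝 (0 : E), ‖charFun F ξ‖ = 1 → ξ ∈ (vectorSpan ℝ F.support)ᗮ := by
  obtain ⟨t, ht_sub, ht_span⟩ := (Submodule.fg_span_iff_fg_span_finset_subset (R := ℝ)
    (F.support -ᵥ F.support)).1 (Module.Finite.iff_fg.1 ‹_›)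
  have hsmall : ∀ᶠ ξ in 𝓝 (0 : E), ∀ z ∈ t, |⟪z, ξ⟫| < 2 * π := by
    refine (eventually_all_finset t).2 fun z _ => ?_
    have hcont : Continuous fun ξ : E => |⟪z, ξ⟫| := by fun_prop
    exact hcont.continuousAt.eventually_lt_const (by simpa using two_pi_pos)
  filter_upwards [hsmall] with ξ hξ hone
  have hortho : ∀ z ∈ t, ⟪z, ξ⟫ = 0 := by
    intro z hz
    obtain ⟨x, hx, y, hy, rfl⟩ := ht_sub hz
    have hsub : ⟪x -ᵥ y, ξ⟫ = ⟪x, ξ⟫ - ⟪y, ξ⟫ := inner_sub_left x y ξ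
    rw [hsub, sub_eq_zero]
    exact eq_of_exp_mul_I_eq_of_abs_sub_lt
      (exp_inner_mul_I_eq_of_norm_charFun_eq_one hone hx hy) (hsub ▸ hξ _ hz)
  rw [vectorSpan_def, ht_span, ← Submodule.span_singleton_le_iff_mem, ← Submodule.isOrtho_iff_le,
    Submodule.isOrtho_comm, Submodule.isOrtho_span]
  exact fun z hz _ hζ => hζ ▸ hortho z hz

variable [FiniteDimensional ℝ E]

lemma finrank_orthogonal_vectorSpan_support_le_one [OpensMeasurableSpace E]
    (hF : ∀ A : AffineSubspace ℝ E,
      Module.finrank ℝ A.direction + 2 ≤ Module.finrank ℝ E → F A ≠ 1) :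
    Module.finrank ℝ (vectorSpan ℝ F.support)ᗮ ≤ 1 := by
  by_contra! hlt
  refine hF (affineSpan ℝ F.support) ?_
    (measure_eq_one_of_subset (measure_support_eq_one F) (subset_affineSpan ℝ _))
  rw [direction_affineSpan, ← (vectorSpan ℝ F.support).finrank_add_finrank_orthogonal]
  gcongr
  exact hlt

theorem charFn_bound_not_on_line_general [BorelSpace E] [Nontrivial E]
    (hF : ∀ A : AffineSubspace ℝ E,
      Module.finrank ℝ A.direction + 2 ≤ Module.finrank ℝ E → F A ≠ 1) :
    ∃ n : E, ‖n‖ = 1 ∧ ∃ r > 0, ∀ a b ε : ℝ, 0 < a → b < r → ε < 1 →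
      ∃ κ > 0, ∀ ξ : E, a ≤ ‖ξ‖ ∧ ‖ξ‖ ≤ b ∧ |⟪ξ, n⟫| ≤ ε * ‖ξ‖ → κ ≤ 1 - ‖charFun F ξ‖ := by
  obtain ⟨n, hn, hspan⟩ :=
    exists_norm_eq_one_le_span_singleton (finrank_orthogonal_vectorSpan_support_le_one hF)
  obtain ⟨r, hr, hortho⟩ :=
    Metric.eventually_nhds_iff_ball.1 (eventually_mem_orthogonal_of_norm_charFun_eq_one F)
  refine ⟨n, hn, r, hr, fun a b ε ha hb hε =>
    exists_pos_le_one_sub_norm_charFun (isCompact_annulus_inter_cone n a b ε) ?_⟩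
  rintro ξ ⟨haξ, hξb, hcone⟩ hone
  have hξ_mem : ξ ∈ ℝ ∙ n := hspan (hortho ξ (mem_ball_zero_iff.2 (hξb.trans_lt hb)) hone)
  rw [abs_real_inner_eq_norm_of_mem_span_singleton hn hξ_mem] at hcone
  exact hcone.not_gt (mul_lt_of_lt_one_left (ha.trans_le haξ) hε)

end CharFun

lemma charFn_eq_charFun_neg (F : Measure E3) (ξ : E3) : charFn F ξ = charFun F (-ξ) := by
  simp only [charFn, charFun_apply, inner_neg_right, Complex.ofReal_neg, mul_neg, mul_comm]

lemma norm_charFn_eq_norm_charFun (F : Measure E3) (ξ : E3) : ‖charFn F ξ‖ = ‖charFun F ξ‖ := by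
  rw [charFn_eq_charFun_neg, charFun_neg, RCLike.norm_conj]

/-- a probability measure not concentrated on a straight line has
a characteristic function uniformly bounded away from `1` in modulus on a
suitable annular, almost-equatorial region. -/
theorem charFn_bound_not_on_line
    (F₀ : Measure E3) [IsProbabilityMeasure F₀]
    (hnoline : ∀ (v₀ w : E3), ‖w‖ = 1 → F₀ {v : E3 | ∃ τ : ℝ, v = v₀ + τ • w} ≠ 1) :
    ∃ (n : E3) (d μ ε κ₀ : ℝ), ‖n‖ = 1 ∧ 0 < μ ∧ μ < d ∧ 0 < ε ∧ 0 < κ₀ ∧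
      ∀ ξ : E3, d - μ ≤ ‖ξ‖ → ‖ξ‖ ≤ d + μ → |⟪ξ, n⟫| ≤ ε * ‖ξ‖ →
        κ₀ ≤ 1 - ‖charFn F₀ ξ‖ := by
  obtain ⟨n, hn, r, hr, hbound⟩ := charFn_bound_not_on_line_general (F := F₀) fun A hA =>
    measure_ne_one_of_finrank_direction_le_one hnoline (by simpa using hA)
  obtain ⟨κ₀, hκ₀, hκ⟩ :=
    hbound (r / 2 - r / 4) (r / 2 + r / 4) (1 / 2) (by linarith) (by linarith) (by norm_num)
  refine ⟨n, r / 2, r / 4, 1 / 2, κ₀, hn, by positivity, by linarith, by norm_num, hκ₀, ?_⟩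
  intro ξ hlower hupper hcone
  rw [norm_charFn_eq_norm_charFun]
  exact hκ ξ ⟨hlower, hupper, hcone⟩
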